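/- arXiv:1409.2908 — 2 statements merged into one kernel-verified Lean document; each statement's English description precedes it below -/
import Mathlib

section
/- Let R be a commutative ring and let k be a natural number. Define the recursive Strassen multiplication function strassen on 2^k × 2^k matrices over R as follows: for k = 0 it is scalar multiplication, and for k ≥ 1 it partitions each matrix into four 2^(k-1) × 2^(k-1) blocks, forms S1 = A11 + A22, S2 = A21 + A22, S3 = A11, S4 = A22, S5 = A11 + A12, S6 = A21 - A11, S7 = A12 - A22 and T1 = B11 + B22, T2 = B11, T3 = B12 - B22, T4 = B21 - B11, T5 = B22, T6 = B11 + B12, T7 = B21 + B22, recursively computes M_r = strassen(S_r, T_r) for 1 ≤ r ≤ 7, and returns the block matrix with blocks C11 = M1 + M4 - M5 + M7, C12 = M3 + M5, C21 = M2 + M4, C22 = M1 - M2 + M3 + M6. Then for all 2^k × 2^k matrices A and B over R, strassen(A, B) = A * B. -/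
/-- The `(p, q)` block (for `p, q : Fin 2`) of a `2^(k+1) × 2^(k+1)` matrix,
each block being of size `2^k × 2^k`. -/
def blk {α : Type*} {k : ℕ} (A : Matrix (Fin (2 ^ (k + 1))) (Fin (2 ^ (k + 1))) α)
    (p q : Fin 2) : Matrix (Fin (2 ^ k)) (Fin (2 ^ k)) α :=
  Matrix.of fun i j =>
    A ⟨(p : ℕ) * 2 ^ k + (i : ℕ), by
        have h2 : 2 ^ (k + 1) = 2 ^ k + 2 ^ k := by ring
        have hp : (p : ℕ) ≤ 1 := Nat.le_of_lt_succ p.isLt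
        have hp2 : (p : ℕ) * 2 ^ k ≤ 1 * 2 ^ k := Nat.mul_le_mul_right _ hp
        have hi := i.isLt
        omega⟩
      ⟨(q : ℕ) * 2 ^ k + (j : ℕ), by
        have h2 : 2 ^ (k + 1) = 2 ^ k + 2 ^ k := by ring
        have hq : (q : ℕ) ≤ 1 := Nat.le_of_lt_succ q.isLt
        have hq2 : (q : ℕ) * 2 ^ k ≤ 1 * 2 ^ k := Nat.mul_le_mul_right _ hq
        have hj := j.isLt
        omega⟩

/-- Assemble a `2^(k+1) × 2^(k+1)` matrix from its four `2^k × 2^k` blocks. -/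
def unblk {α : Type*} {k : ℕ} (C11 C12 C21 C22 : Matrix (Fin (2 ^ k)) (Fin (2 ^ k)) α) :
    Matrix (Fin (2 ^ (k + 1))) (Fin (2 ^ (k + 1))) α :=
  Matrix.of fun i j =>
    have h2 : 2 ^ (k + 1) = 2 ^ k + 2 ^ k := by ring
    if hi : (i : ℕ) < 2 ^ k then
      if hj : (j : ℕ) < 2 ^ k then C11 ⟨i, hi⟩ ⟨j, hj⟩
      else C12 ⟨i, hi⟩ ⟨(j : ℕ) - 2 ^ k, by have := j.isLt; omega⟩
    else
      if hj : (j : ℕ) < 2 ^ k then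
        C21 ⟨(i : ℕ) - 2 ^ k, by have := i.isLt; omega⟩ ⟨j, hj⟩
      else
        C22 ⟨(i : ℕ) - 2 ^ k, by have := i.isLt; omega⟩
          ⟨(j : ℕ) - 2 ^ k, by have := j.isLt; omega⟩

/-- Strassen's recursive fast matrix multiplication on `2^k × 2^k` matrices:
scalar multiplication in the base case `k = 0`, and for `k ≥ 1`, seven recursive
multiplications of linear combinations of the `2^(k-1) × 2^(k-1)` blocks. -/
def strassen {α : Type*} [CommRing α] :
    (k : ℕ) → Matrix (Fin (2 ^ k)) (Fin (2 ^ k)) α →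
      Matrix (Fin (2 ^ k)) (Fin (2 ^ k)) α → Matrix (Fin (2 ^ k)) (Fin (2 ^ k)) α
  | 0, A, B => Matrix.of fun _ _ => A 0 0 * B 0 0
  | (k + 1), A, B =>
    let A11 := blk A 0 0; let A12 := blk A 0 1
    let A21 := blk A 1 0; let A22 := blk A 1 1
    let B11 := blk B 0 0; let B12 := blk B 0 1
    let B21 := blk B 1 0; let B22 := blk B 1 1
    let M1 := strassen k (A11 + A22) (B11 + B22)
    let M2 := strassen k (A21 + A22) B11
    let M3 := strassen k A11 (B12 - B22)
    let M4 := strassen k A22 (B21 - B11)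
    let M5 := strassen k (A11 + A12) B22
    let M6 := strassen k (A21 - A11) (B11 + B12)
    let M7 := strassen k (A12 - A22) (B21 + B22)
    unblk (M1 + M4 - M5 + M7) (M3 + M5) (M2 + M4) (M1 - M2 + M3 + M6)

theorem sum_split {α : Type*} [AddCommMonoid α] {m n : ℕ} (h : n = m + m) (f : Fin n → α) :
    ∑ x, f x = ∑ x : Fin m, f ⟨x, by omega⟩ + ∑ x : Fin m, f ⟨m + x, by omega⟩ := by
  subst h
  rw [Fin.sum_univ_add]
  rfl

theorem blk_mul {α : Type*} [CommRing α] {k : ℕ}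
    (A B : Matrix (Fin (2 ^ (k + 1))) (Fin (2 ^ (k + 1))) α) (p q : Fin 2) :
    blk (A * B) p q = blk A p 0 * blk B 0 q + blk A p 1 * blk B 1 q := by
  have h2 : 2 ^ (k + 1) = 2 ^ k + 2 ^ k := by ring
  ext i j
  simp only [blk, Matrix.of_apply, Matrix.mul_apply, Matrix.add_apply]
  rw [sum_split h2]
  simp

theorem unblk_blk {α : Type*} {k : ℕ}
    (A : Matrix (Fin (2 ^ (k + 1))) (Fin (2 ^ (k + 1))) α) :
    unblk (blk A 0 0) (blk A 0 1) (blk A 1 0) (blk A 1 1) = A := by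
  ext i j
  simp only [unblk, blk, Matrix.of_apply]
  split_ifs <;> congr 1 <;> first | (congr 1; ext; simp; done) | (ext; simp; done) | (congr 1; ext; simp; omega) | (ext; simp; omega)

/-- Strassen's recursive algorithm correctly multiplies `2^k × 2^k` matrices
over any commutative ring. -/
theorem strassen_correct {α : Type*} [CommRing α] (k : ℕ)
    (A B : Matrix (Fin (2 ^ k)) (Fin (2 ^ k)) α) :
    strassen k A B = A * B := by
  induction k with
  | zero =>
    ext i j
    have hi : i = 0 := Subsingleton.elim (α := Fin 1) i 0
    have hj : j = 0 := Subsingleton.elim (α := Fin 1) j 0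
    subst hi hj
    rw [Matrix.mul_apply]
    exact (Fin.sum_univ_one (fun x : Fin 1 => A 0 x * B x 0)).symm
  | succ k ih =>
    rw [← unblk_blk (A * B)]
    simp only [strassen, ih, blk_mul]
    congr 1 <;> noncomm_ring
end

section
/- Let T be the 4 × 4 × 4 matrix multiplication tensor for ⟨2,2,2⟩. Although T has 8 nonzero entries, its rank is at most 7: there exist real matrices U, V, W, each of size 4 × 7, such that T_{ijk} = Σ_{r=1}^7 U_{ir} V_{jr} W_{kr} for all 1 ≤ i, j, k ≤ 4. -/
/-- The matrix multiplication tensor for ⟨M,K,N⟩, of size `MK × KN × MN`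
(0-based indices, corresponding to 1-based indices `i, j, k` via `i-1, j-1, k-1`). -/
def mmTensor (M K N : ℕ) (i : Fin (M * K)) (j : Fin (K * N)) (k : Fin (M * N)) : ℝ :=
  if (i : ℕ) % K = (j : ℕ) / N ∧ (j : ℕ) % N = (k : ℕ) % N ∧
      (i : ℕ) / K = (k : ℕ) / N then 1 else 0

/-- Row-major vectorization of an `I × J` matrix. -/
def rvec {I J : ℕ} (A : Matrix (Fin I) (Fin J) ℝ) : Fin (I * J) → ℝ := fun a =>
  A ⟨(a : ℕ) / J, by
      have h := a.isLt
      have hJ : 0 < J := Nat.pos_of_ne_zero fun h0 => by subst h0; simp at h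
      exact (Nat.div_lt_iff_lt_mul hJ).mpr h⟩
    ⟨(a : ℕ) % J, by
      have h := a.isLt
      have hJ : 0 < J := Nat.pos_of_ne_zero fun h0 => by subst h0; simp at h
      exact Nat.mod_lt _ hJ⟩

open Classical in
/-- Although the `⟨2,2,2⟩` matrix multiplication tensor has 8 nonzero entries,
its rank is at most 7: it admits a rank-7 decomposition. -/
theorem mmTensor222_rank_le_seven :
    (Finset.univ.filter fun p : Fin (2 * 2) × Fin (2 * 2) × Fin (2 * 2) =>
        mmTensor 2 2 2 p.1 p.2.1 p.2.2 = 1).card = 8 ∧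
    ∃ (U : Matrix (Fin (2 * 2)) (Fin 7) ℝ) (V : Matrix (Fin (2 * 2)) (Fin 7) ℝ)
      (W : Matrix (Fin (2 * 2)) (Fin 7) ℝ),
      ∀ (i : Fin (2 * 2)) (j : Fin (2 * 2)) (k : Fin (2 * 2)),
        mmTensor 2 2 2 i j k = ∑ r : Fin 7, U i r * V j r * W k r := by
  constructor
  · have key : (Finset.univ.filter fun p : Fin (2 * 2) × Fin (2 * 2) × Fin (2 * 2) =>
        mmTensor 2 2 2 p.1 p.2.1 p.2.2 = 1) =
      @Finset.filter _ (fun p : Fin (2 * 2) × Fin (2 * 2) × Fin (2 * 2) =>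
        (p.1 : ℕ) % 2 = (p.2.1 : ℕ) / 2 ∧ (p.2.1 : ℕ) % 2 = (p.2.2 : ℕ) % 2 ∧
          (p.1 : ℕ) / 2 = (p.2.2 : ℕ) / 2) (fun _ => instDecidableAnd) Finset.univ := by
      ext p
      simp [mmTensor]
    rw [key]
    decide
  · let U : Matrix (Fin (2 * 2)) (Fin 7) ℤ :=
      ![![1, 0, 1, 0, 1, -1, 0], ![0, 0, 0, 0, 1, 0, 1],
        ![0, 1, 0, 0, 0, 1, 0], ![1, 1, 0, 1, 0, 0, -1]]
    let V : Matrix (Fin (2 * 2)) (Fin 7) ℤ :=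
      ![![1, 1, 0, -1, 0, 1, 0], ![0, 0, 1, 0, 0, 1, 0],
        ![0, 0, 0, 1, 0, 0, 1], ![1, 0, -1, 0, 1, 0, 1]]
    let W : Matrix (Fin (2 * 2)) (Fin 7) ℤ :=
      ![![1, 0, 0, 1, -1, 0, 1], ![0, 0, 1, 0, 1, 0, 0],
        ![0, 1, 0, 1, 0, 0, 0], ![1, -1, 1, 0, 0, 1, 0]]
    have h : ∀ i j k : Fin (2 * 2),
        @ite ℤ ((i : ℕ) % 2 = (j : ℕ) / 2 ∧ (j : ℕ) % 2 = (k : ℕ) % 2 ∧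
          (i : ℕ) / 2 = (k : ℕ) / 2) instDecidableAnd 1 0
          = ∑ r : Fin 7, U i r * V j r * W k r := by
      decide
    refine ⟨fun i r => (U i r : ℝ), fun i r => (V i r : ℝ), fun i r => (W i r : ℝ), ?_⟩
    intro i j k
    have h' := congrArg (Int.cast : ℤ → ℝ) (h i j k)
    push_cast at h'
    rw [← h']
    simp only [mmTensor]
end
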